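/- Let N≥10 be an integer, s∈[0,1], j∈{1,2,3}, and let v∈H¹(𝕋). Suppose f∈L²(𝕋) satisfies |f̂_k| ≤ ∑_{k₁+k₂+k₃=k, |k₁+k₂|>N} |k|^{−1}|k_j| |v̂_{k₁}||v̂_{k₂}||v̂_{k₃}| for every k with 0<|k|≤N, and f̂_k=0 for k=0 and for |k|>N. Then ‖f‖_{H^s} ≤ C N^{−1+s} ‖v‖_{H¹}³, where C is an absolute constant. -/

import Mathlib

/-!
Since `f̂` lives on `0 < |k| ≤ N`, one has `(1 + k²)^s ≤ 2 N^{2s}` there, so it suffices to prove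
`∑ |f̂_k|² ≲ N⁻² E³` with `E = ∑ (1 + k²) |v̂_k|²`; write `B_k = (1 + k²) |v̂_k|²`.

* Low modes, `2|k| ≤ N`. As `|k₁ + k₂| > N`, both `|k₃|` and `max (|k₁|, |k₂|)` are at least `N/2`,
  hence some `i ≠ j` has `|k_i| ≥ N/2`. Then
  `|k_j| |v̂_{k_i}| |v̂_{k_j}| ≤ (B_{k_i} + B_{k_j}) / N`, and the remaining factor is summed in `ℓ¹`.
  This bounds the sum uniformly in `k` (`low_bound`), and the factor `|k|⁻²` is summable in `k`.
* High modes, `2|k| > N`. The factor `|k|⁻¹ ≤ 2/N` is the gain, and Cauchy–Schwarz against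
  the weights `1 / (1 + k_i²)` gives `|f̂_k|² ≲ N⁻² T_k`, where
  `T_k = ∑_{k₁+k₂+k₃=k} B_{k₁} B_{k₂} B_{k₃}` satisfies `∑ T_k = E³`
  (`high_bound`, `hasSum_conv`).
-/

noncomputable section

open Complex MeasureTheory
open scoped BigOperators

/-- A function on the torus `𝕋 = (-π,π)` is represented by its sequence of Fourier
coefficients `f̂ : ℤ → ℂ`. -/
abbrev FSeq := ℤ → ℂ

/-- Membership in the Sobolev space `H^s(𝕋)`:
`∑_{k∈ℤ} (1+k²)^s |f̂_k|² < ∞`. -/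
def InHs (s : ℝ) (a : FSeq) : Prop :=
  Summable fun k : ℤ => (1 + (k : ℝ) ^ 2) ^ s * ‖a k‖ ^ 2

/-- The `H^s(𝕋)` norm: `‖f‖_{H^s}² = 2π ∑_{k∈ℤ} (1+k²)^s |f̂_k|²`. -/
def hnorm (s : ℝ) (a : FSeq) : ℝ :=
  Real.sqrt (2 * Real.pi * ∑' k : ℤ, (1 + (k : ℝ) ^ 2) ^ s * ‖a k‖ ^ 2)

/-! ### Weights, energy density and the `ℓ¹` bound -/

/-- The summable weight `1 / (1 + k²)`. -/
def wt (k : ℤ) : ℝ := (1 + (k : ℝ) ^ 2)⁻¹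

/-- The constant `κ = ∑ 1 / (1 + k²)`. -/
def kap : ℝ := ∑' k : ℤ, wt k

/-- The `H¹` energy density `(1 + k²) a_k²` of a sequence. -/
def en (a : ℤ → ℝ) (k : ℤ) : ℝ := (1 + (k : ℝ) ^ 2) * a k ^ 2

/-- The sum of `F` over the three pairs taken from the frequencies `(p₁, p₂, k - p₁ - p₂)`. -/
def pairSum (F : ℤ × ℤ → ℝ) (k : ℤ) (p : ℤ × ℤ) : ℝ :=
  F (p.1, p.2) + F (p.1, k - p.1 - p.2) + F (p.2, k - p.1 - p.2)

lemma wt_pos (k : ℤ) : 0 < wt k := by unfold wt; positivity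

lemma en_nonneg (a : ℤ → ℝ) (k : ℤ) : 0 ≤ en a k := by unfold en; positivity

lemma en_mul_wt (a : ℤ → ℝ) (k : ℤ) : en a k * wt k = a k ^ 2 := by
  unfold en wt
  have : (1 + (k : ℝ) ^ 2) ≠ 0 := by positivity
  field_simp

lemma summable_wt : Summable wt := by
  have h1 : Summable fun k : ℤ => 1 / (k : ℝ) ^ 2 := by
    rw [Real.summable_one_div_int_pow]; norm_num
  have h2 : Summable fun k : ℤ => if k = 0 then (1 : ℝ) else 0 :=
    (hasSum_ite_eq (0 : ℤ) (1 : ℝ)).summable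
  refine Summable.of_nonneg_of_le (fun k => (wt_pos k).le) (fun k => ?_) (h1.add h2)
  unfold wt
  by_cases hk : k = 0
  · simp [hk]
  · have : (0 : ℝ) < (k : ℝ) ^ 2 := by positivity
    simp only [hk, if_false, add_zero, one_div]
    exact inv_anti₀ this (by linarith)

lemma kap_pos : 0 < kap :=
  summable_wt.tsum_pos (fun k => (wt_pos k).le) 0 (wt_pos 0)

lemma summable_of_en {a : ℤ → ℝ} (ha : ∀ k, 0 ≤ a k) (hE : Summable (en a)) : Summable a := by
  refine Summable.of_nonneg_of_le ha (fun k => ?_) (hE.add summable_wt)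
  have h := en_mul_wt a k
  have h1 := en_nonneg a k
  have h2 := (wt_pos k).le
  refine abs_le_of_sq_le_sq' ?_ (by positivity) |>.2
  nlinarith [sq_nonneg (en a k), sq_nonneg (wt k), mul_nonneg h1 h2]

/-- The `ℓ¹` norm is controlled by the `H¹` norm. -/
lemma tsum_sq_le {a : ℤ → ℝ} (ha : ∀ k, 0 ≤ a k) (hE : Summable (en a)) :
    (∑' k, a k) ^ 2 ≤ (∑' k, en a k) * kap := by
  have hE0 : 0 ≤ ∑' k, en a k := tsum_nonneg (en_nonneg a)
  have : ∑' k, a k ≤ Real.sqrt ((∑' k, en a k) * kap) := by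
    refine Real.tsum_le_of_sum_le (fun k => ha k) fun u => Real.le_sqrt_of_sq_le ?_
    refine (Finset.sum_sq_le_sum_mul_sum_of_sq_le_mul u (f := en a) (g := wt)
      (fun i _ => en_nonneg a i) (fun i _ => (wt_pos i).le)
      (fun i _ => (en_mul_wt a i).ge)).trans ?_
    exact mul_le_mul (hE.sum_le_tsum u (fun i _ => en_nonneg a i))
      (summable_wt.sum_le_tsum u (fun i _ => (wt_pos i).le))
      (Finset.sum_nonneg fun i _ => (wt_pos i).le) hE0
  calc (∑' k, a k) ^ 2 ≤ Real.sqrt ((∑' k, en a k) * kap) ^ 2 :=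
        pow_le_pow_left₀ (tsum_nonneg ha) this 2
    _ = _ := Real.sq_sqrt (mul_nonneg hE0 kap_pos.le)

/-! ### Sums over frequency pairs and triples -/

lemma hasSum_pairSum {F : ℤ × ℤ → ℝ} {S : ℝ} (hF : HasSum F S) (k : ℤ) :
    HasSum (pairSum F k) (3 * S) := by
  let e2 : ℤ × ℤ ≃ ℤ × ℤ :=
    ⟨fun p => (p.1, k - p.1 - p.2), fun p => (p.1, k - p.1 - p.2),
      fun p => by ext <;> simp, fun p => by ext <;> simp⟩
  let e3 : ℤ × ℤ ≃ ℤ × ℤ :=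
    ⟨fun p => (p.2, k - p.1 - p.2), fun p => (k - p.1 - p.2, p.1),
      fun p => by ext <;> simp, fun p => by ext <;> simp; ring⟩
  have h := (hF.add (e2.hasSum_iff.2 hF)).add (e3.hasSum_iff.2 hF)
  have h3 : S + S + S = 3 * S := by ring
  rw [h3] at h
  exact h

lemma hasSum_mul {f g : ℤ → ℝ} (hf : Summable f) (hg : Summable g) (hf0 : ∀ k, 0 ≤ f k)
    (hg0 : ∀ k, 0 ≤ g k) :
    HasSum (fun p : ℤ × ℤ => f p.1 * g p.2) ((∑' k, f k) * ∑' k, g k) :=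
  hf.hasSum.mul hg.hasSum (hf.mul_of_nonneg hg hf0 hg0)

/-- The inner sums `T_k = ∑_{k₁+k₂+k₃=k} B_{k₁} B_{k₂} B_{k₃}` converge, and `∑ T_k = (∑ B)³`. -/
lemma hasSum_conv {B : ℤ → ℝ} (hB : Summable B) (hB0 : ∀ k, 0 ≤ B k) :
    (∀ k : ℤ, Summable fun p : ℤ × ℤ => B p.1 * B p.2 * B (k - p.1 - p.2)) ∧
    HasSum (fun k : ℤ => ∑' p : ℤ × ℤ, B p.1 * B p.2 * B (k - p.1 - p.2))
      ((∑' k, B k) ^ 3) := by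
  have h2 := hasSum_mul hB hB hB0 hB0
  have h20 : ∀ p : ℤ × ℤ, 0 ≤ B p.1 * B p.2 := fun p => mul_nonneg (hB0 _) (hB0 _)
  have h3 : HasSum (fun q : ℤ × (ℤ × ℤ) => B q.1 * (B q.2.1 * B q.2.2))
      ((∑' k, B k) * ((∑' k, B k) * ∑' k, B k)) :=
    hB.hasSum.mul h2 (hB.mul_of_nonneg h2.summable hB0 h20)
  let e : ℤ × (ℤ × ℤ) ≃ ℤ × (ℤ × ℤ) :=
    ⟨fun q => (q.1 - q.2.1 - q.2.2, q.2), fun q => (q.1 + q.2.1 + q.2.2, q.2),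
      fun q => by ext <;> simp <;> ring, fun q => by ext <;> simp <;> ring⟩
  have h4 : HasSum (fun q : ℤ × (ℤ × ℤ) => B q.2.1 * B q.2.2 * B (q.1 - q.2.1 - q.2.2))
      ((∑' k, B k) ^ 3) := by
    have := e.hasSum_iff.2 h3
    convert this using 1
    · funext q
      simp only [Function.comp, e, Equiv.coe_fn_mk]
      ring
    · ring
  have h5 : ∀ k : ℤ, Summable fun p : ℤ × ℤ => B p.1 * B p.2 * B (k - p.1 - p.2) :=
    fun k => h4.summable.prod_factor k
  exact ⟨h5, h4.prod_fiberwise fun k => (h5 k).hasSum⟩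

/-! ### Low output modes -/

/-- The summand of the trilinear sum, for the frequencies `(p₁, p₂, k - p₁ - p₂)`. -/
def term3 (N : ℕ) (j : Fin 3) (a : ℤ → ℝ) (k : ℤ) (p : ℤ × ℤ) : ℝ :=
  if (N : ℤ) < |p.1 + p.2| then
    (|(k : ℝ)|)⁻¹ * |((![p.1, p.2, k - p.1 - p.2] j : ℤ) : ℝ)| *
      (a p.1 * a p.2 * a (k - p.1 - p.2)) else 0

lemma term3_nonneg (N : ℕ) (j : Fin 3) {a : ℤ → ℝ} (ha : ∀ k, 0 ≤ a k) (k : ℤ) (p : ℤ × ℤ) :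
    0 ≤ term3 N j a k p := by
  have := ha p.1
  have := ha p.2
  have := ha (k - p.1 - p.2)
  unfold term3
  split_ifs
  · positivity
  · exact le_rfl

/-- If the frequency `x` is large, the derivative on `y` is absorbed with a gain `1/N`. -/
lemma two_factor (N : ℕ) (hN : 10 ≤ N) {a : ℤ → ℝ} (ha : ∀ k, 0 ≤ a k) {x y : ℤ}
    (hx : (N : ℤ) ≤ 2 * |x|) : |(y : ℝ)| * (a x * a y) ≤ (en a x + en a y) / N := by
  have hN0 : (0 : ℝ) < N := by exact_mod_cast (by omega : 0 < N)
  have hx' : (N : ℝ) ≤ 2 * |(x : ℝ)| := by exact_mod_cast hx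
  rw [le_div_iff₀ hN0]
  have h0 : 0 ≤ |(y : ℝ)| * (a x * a y) :=
    mul_nonneg (abs_nonneg _) (mul_nonneg (ha x) (ha y))
  have h1 := mul_le_mul_of_nonneg_left hx' h0
  have h2 := two_mul_le_add_sq (|(x : ℝ)| * a x) (|(y : ℝ)| * a y)
  rw [mul_pow, mul_pow, sq_abs, sq_abs] at h2
  unfold en
  nlinarith [sq_nonneg (a x), sq_nonneg (a y)]

/-- Pointwise bound for low output modes: two of the three frequencies are at least `N/2`. -/
lemma low_pointwise (N : ℕ) (hN : 10 ≤ N) (j : Fin 3) {a : ℤ → ℝ} (ha : ∀ k, 0 ≤ a k) {k : ℤ}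
    (hk : 2 * |k| ≤ N) (p : ℤ × ℤ) :
    term3 N j a k p ≤ (|(k : ℝ)|)⁻¹ / N *
      pairSum (fun q => en a q.1 * a q.2 + a q.1 * en a q.2) k p := by
  obtain ⟨x, y⟩ := p
  obtain ⟨z, hz⟩ : ∃ z, z = k - x - y := ⟨_, rfl⟩
  have hN0 : (0 : ℝ) < N := by exact_mod_cast (by omega : 0 < N)
  have ax := ha x
  have ay := ha y
  have az := ha z
  have ex := en_nonneg a x
  have ey := en_nonneg a y
  have ez := en_nonneg a z
  have hk0 : 0 ≤ (|(k : ℝ)|)⁻¹ := by positivity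
  unfold term3 pairSum
  simp only [← hz]
  split_ifs with h
  swap
  · positivity
  have hz2 : (N : ℤ) ≤ 2 * |z| := by grind
  have hxy : (N : ℤ) ≤ 2 * |x| ∨ (N : ℤ) ≤ 2 * |y| := by grind
  rw [mul_assoc, div_mul_eq_mul_div, mul_div_assoc]
  refine mul_le_mul_of_nonneg_left ?_ hk0
  rw [le_div_iff₀ hN0]
  -- The common shape: `u` is the large frequency, `w` carries the derivative, `c` is the third.
  have key : ∀ u w c : ℤ, (N : ℤ) ≤ 2 * |u| →
      |(w : ℝ)| * (a u * a w) * a c * N ≤ (en a u + en a w) * a c := by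
    intro u w c hu
    have h1 := two_factor N hN ha (y := w) hu
    rw [le_div_iff₀ hN0] at h1
    nlinarith [mul_le_mul_of_nonneg_right h1 (ha c)]
  have q1 := mul_nonneg ex ay
  have q2 := mul_nonneg ex az
  have q3 := mul_nonneg ey ax
  have q4 := mul_nonneg ey az
  have q5 := mul_nonneg ez ax
  have q6 := mul_nonneg ez ay
  fin_cases j
  · have := key z x y hz2
    simp
    nlinarith
  · have := key z y x hz2
    simp
    nlinarith
  · simp
    rcases hxy with hx | hy
    · have := key x z y hx
      nlinarith
    · have := key y z x hy
      nlinarith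

lemma low_bound (N : ℕ) (hN : 10 ≤ N) (j : Fin 3) {a : ℤ → ℝ} (ha : ∀ k, 0 ≤ a k)
    (hE : Summable (en a)) {k : ℤ} (hk0 : k ≠ 0) (hk : 2 * |k| ≤ N) :
    (∑' p, term3 N j a k p) ^ 2 ≤ 72 * kap * (∑' k, en a k) ^ 3 / N ^ 2 * wt k := by
  have hN0 : (0 : ℝ) < N := by exact_mod_cast (by omega : 0 < N)
  have hA := summable_of_en ha hE
  have hF := (hasSum_mul hE hA (en_nonneg a) ha).add (hasSum_mul hA hE ha (en_nonneg a))
  have hG := (hasSum_pairSum hF k).mul_left ((|(k : ℝ)|)⁻¹ / N)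
  have hle : ∑' p, term3 N j a k p ≤ (|(k : ℝ)|)⁻¹ / N *
      (3 * ((∑' k, en a k) * (∑' k, a k) + (∑' k, a k) * ∑' k, en a k)) := by
    refine Real.tsum_le_of_sum_le (fun p => term3_nonneg N j ha k p) fun u => ?_
    refine (Finset.sum_le_sum fun p _ => low_pointwise N hN j ha hk p).trans ?_
    refine sum_le_hasSum u (fun p _ => ?_) hG
    exact (term3_nonneg N j ha k p).trans (low_pointwise N hN j ha hk p)
  have hsq := tsum_sq_le ha hE
  set E := ∑' k, en a k
  set L := ∑' k, a k
  have hE0 : 0 ≤ E := tsum_nonneg (en_nonneg a)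
  have hk1 : (1 : ℝ) ≤ (k : ℝ) ^ 2 := by
    have : 1 ≤ k ^ 2 := by have := sq_pos_of_ne_zero hk0; omega
    exact_mod_cast this
  have hwt : ((k : ℝ) ^ 2)⁻¹ ≤ 2 * wt k := by
    unfold wt
    rw [← div_eq_mul_inv, inv_eq_one_div, div_le_div_iff₀ (by linarith) (by positivity)]
    linarith
  calc (∑' p, term3 N j a k p) ^ 2
      ≤ ((|(k : ℝ)|)⁻¹ / N * (3 * (E * L + L * E))) ^ 2 :=
        pow_le_pow_left₀ (tsum_nonneg fun p => term3_nonneg N j ha k p) hle 2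
    _ = ((k : ℝ) ^ 2)⁻¹ * (36 * E ^ 2 / N ^ 2 * L ^ 2) := by
        rw [mul_pow, div_pow, inv_pow, sq_abs]; ring
    _ ≤ (2 * wt k) * (36 * E ^ 2 / N ^ 2 * (E * kap)) := by
        have := (wt_pos k).le
        gcongr
    _ = _ := by ring

/-! ### High output modes -/

/-- Pointwise bound for high output modes, in the form needed for Cauchy–Schwarz. -/
lemma high_pointwise (N : ℕ) (hN : 10 ≤ N) (j : Fin 3) (a : ℤ → ℝ) {k : ℤ}
    (hk : (N : ℤ) < 2 * |k|) (p : ℤ × ℤ) :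
    term3 N j a k p ^ 2 ≤ (en a p.1 * en a p.2 * en a (k - p.1 - p.2)) *
      (4 / N ^ 2 * pairSum (fun q => wt q.1 * wt q.2) k p) := by
  obtain ⟨x, y⟩ := p
  obtain ⟨z, hz⟩ : ∃ z, z = k - x - y := ⟨_, rfl⟩
  have hN0 : (0 : ℝ) < N := by exact_mod_cast (by omega : 0 < N)
  have hk' : (N : ℝ) < 2 * |(k : ℝ)| := by exact_mod_cast hk
  have hinv : (|(k : ℝ)|)⁻¹ ≤ 2 / N := by
    rw [inv_eq_one_div, div_le_div_iff₀ (by linarith) hN0]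
    linarith
  have ex := en_nonneg a x
  have ey := en_nonneg a y
  have ez := en_nonneg a z
  have wx := (wt_pos x).le
  have wy := (wt_pos y).le
  have wz := (wt_pos z).le
  unfold term3 pairSum
  simp only [← hz]
  split_ifs with h
  swap
  · rw [zero_pow two_ne_zero]
    positivity
  have hsq : ((|(k : ℝ)|)⁻¹) ^ 2 ≤ 4 / N ^ 2 := by
    calc ((|(k : ℝ)|)⁻¹) ^ 2 ≤ (2 / N) ^ 2 := pow_le_pow_left₀ (by positivity) hinv 2
      _ = _ := by rw [div_pow]; norm_num
  -- The common shape: `u` carries the derivative, `w` and `c` are the two other frequencies.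
  have key : ∀ u w c : ℤ, (u : ℝ) ^ 2 * (a u ^ 2 * a w ^ 2 * a c ^ 2) ≤
      en a u * en a w * en a c * (wt w * wt c) := by
    intro u w c
    have h1 : (u : ℝ) ^ 2 * a u ^ 2 ≤ en a u := by unfold en; nlinarith [sq_nonneg (a u)]
    calc (u : ℝ) ^ 2 * (a u ^ 2 * a w ^ 2 * a c ^ 2)
        = ((u : ℝ) ^ 2 * a u ^ 2) * (a w ^ 2 * a c ^ 2) := by ring
      _ ≤ en a u * (a w ^ 2 * a c ^ 2) := by gcongr
      _ = _ := by rw [← en_mul_wt a w, ← en_mul_wt a c]; ring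
  have main : (((![x, y, z] j : ℤ) : ℝ)) ^ 2 * (a x ^ 2 * a y ^ 2 * a z ^ 2) ≤
      en a x * en a y * en a z * (wt x * wt y + wt x * wt z + wt y * wt z) := by
    have q := mul_nonneg (mul_nonneg ex ey) ez
    have q1 := mul_nonneg q (mul_nonneg wx wy)
    have q2 := mul_nonneg q (mul_nonneg wx wz)
    have q3 := mul_nonneg q (mul_nonneg wy wz)
    fin_cases j
    · have := key x y z
      simp
      linarith
    · have := key y x z
      simp
      linarith
    · have := key z x y
      simp
      linarith
  calc _ = ((|(k : ℝ)|)⁻¹) ^ 2 *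
        ((((![x, y, z] j : ℤ) : ℝ)) ^ 2 * (a x ^ 2 * a y ^ 2 * a z ^ 2)) := by
        rw [mul_pow, mul_pow, sq_abs (((![x, y, z] j : ℤ) : ℝ))]; ring
    _ ≤ 4 / N ^ 2 *
        (en a x * en a y * en a z * (wt x * wt y + wt x * wt z + wt y * wt z)) := by
        gcongr
    _ = _ := by ring

lemma high_bound (N : ℕ) (hN : 10 ≤ N) (j : Fin 3) {a : ℤ → ℝ} (ha : ∀ k, 0 ≤ a k)
    (hE : Summable (en a)) {k : ℤ} (hk : (N : ℤ) < 2 * |k|) :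
    (∑' p, term3 N j a k p) ^ 2 ≤ 12 * kap ^ 2 / N ^ 2 *
      ∑' p : ℤ × ℤ, en a p.1 * en a p.2 * en a (k - p.1 - p.2) := by
  have hT := (hasSum_conv hE (en_nonneg a)).1 k
  have hW := (hasSum_pairSum (hasSum_mul summable_wt summable_wt
    (fun k => (wt_pos k).le) (fun k => (wt_pos k).le)) k).mul_left (4 / (N : ℝ) ^ 2)
  have hT0 : ∀ p : ℤ × ℤ, 0 ≤ en a p.1 * en a p.2 * en a (k - p.1 - p.2) := fun p =>
    mul_nonneg (mul_nonneg (en_nonneg a _) (en_nonneg a _)) (en_nonneg a _)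
  have hW0 : ∀ p, 0 ≤ 4 / (N : ℝ) ^ 2 * pairSum (fun q => wt q.1 * wt q.2) k p := fun p => by
    have := (wt_pos p.1).le
    have := (wt_pos p.2).le
    have := (wt_pos (k - p.1 - p.2)).le
    unfold pairSum
    positivity
  set T := ∑' p : ℤ × ℤ, en a p.1 * en a p.2 * en a (k - p.1 - p.2)
  have hTn : 0 ≤ T := tsum_nonneg hT0
  set M : ℝ := 12 * kap ^ 2 / N ^ 2 * T with hM
  have hMn : 0 ≤ M := by positivity
  have hle : ∑' p, term3 N j a k p ≤ Real.sqrt M := by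
    refine Real.tsum_le_of_sum_le (fun p => term3_nonneg N j ha k p) fun u =>
      Real.le_sqrt_of_sq_le ?_
    refine (Finset.sum_sq_le_sum_mul_sum_of_sq_le_mul u (fun p _ => hT0 p) (fun p _ => hW0 p)
      (fun p _ => high_pointwise N hN j a hk p)).trans ?_
    refine (mul_le_mul (hT.sum_le_tsum u (fun p _ => hT0 p))
      (sum_le_hasSum u (fun p _ => hW0 p) hW) (Finset.sum_nonneg fun p _ => hW0 p) hTn).trans
      (le_of_eq ?_)
    rw [hM]
    change T * (4 / (N : ℝ) ^ 2 * (3 * (kap * kap))) = _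
    ring
  calc (∑' p, term3 N j a k p) ^ 2 ≤ Real.sqrt M ^ 2 :=
        pow_le_pow_left₀ (tsum_nonneg fun p => term3_nonneg N j ha k p) hle 2
    _ = M := Real.sq_sqrt hMn

/-! ### Summation over all modes -/

theorem T3_truncated_bound :
    ∃ C : ℝ, 0 < C ∧ ∀ N : ℕ, 10 ≤ N → ∀ s : ℝ, s ∈ Set.Icc (0 : ℝ) 1 →
      ∀ j : Fin 3, ∀ v f : FSeq, InHs 1 v → InHs 0 f →
      (∀ k : ℤ, k ≠ 0 → |k| ≤ (N : ℤ) → ‖f k‖ ≤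
        ∑' p : ℤ × ℤ, (if (N : ℤ) < |p.1 + p.2| then
          (|(k : ℝ)|)⁻¹ * |((![p.1, p.2, k - p.1 - p.2] j : ℤ) : ℝ)| *
            (‖v p.1‖ * ‖v p.2‖ * ‖v (k - p.1 - p.2)‖) else 0)) →
      f 0 = 0 → (∀ k : ℤ, (N : ℤ) < |k| → f k = 0) →
      hnorm s f ≤ C * (N : ℝ) ^ (-1 + s) * hnorm 1 v ^ 3 := by
  refine ⟨13 * kap, by have := kap_pos; positivity, ?_⟩
  intro N hN s hs j v f hv hf hbd hf0 hfN
  have hκ := kap_pos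
  have hN0 : (0 : ℝ) < N := by exact_mod_cast (by omega : 0 < N)
  have hN1 : (1 : ℝ) ≤ N := by exact_mod_cast (by omega : 1 ≤ N)
  obtain ⟨a, ha_def⟩ : ∃ a : ℤ → ℝ, a = fun k => ‖v k‖ := ⟨_, rfl⟩
  have ha : ∀ k, 0 ≤ a k := fun k => by rw [ha_def]; exact norm_nonneg _
  have hen : (fun k : ℤ => (1 + (k : ℝ) ^ 2) ^ (1 : ℝ) * ‖v k‖ ^ 2) = en a := by
    funext k; rw [Real.rpow_one, ha_def]; rfl
  have hE : Summable (en a) := by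
    have := hv
    unfold InHs at this
    rwa [hen] at this
  have hbd' : ∀ k : ℤ, k ≠ 0 → |k| ≤ (N : ℤ) → ‖f k‖ ≤ ∑' p, term3 N j a k p := by
    intro k h1 h2
    rw [ha_def]
    exact hbd k h1 h2
  obtain ⟨-, hT⟩ := hasSum_conv hE (en_nonneg a)
  set E := ∑' k, en a k with hEdef
  have hE0 : 0 ≤ E := tsum_nonneg (en_nonneg a)
  obtain ⟨T, hTdef⟩ : ∃ T : ℤ → ℝ,
      T = fun k => ∑' p : ℤ × ℤ, en a p.1 * en a p.2 * en a (k - p.1 - p.2) := ⟨_, rfl⟩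
  rw [← hTdef] at hT
  have hT0 : ∀ k, 0 ≤ T k := fun k => by
    rw [hTdef]
    exact tsum_nonneg fun p =>
      mul_nonneg (mul_nonneg (en_nonneg a _) (en_nonneg a _)) (en_nonneg a _)
  have hpt : ∀ k, ‖f k‖ ^ 2 ≤
      72 * kap * E ^ 3 / N ^ 2 * wt k + 12 * kap ^ 2 / N ^ 2 * T k := by
    intro k
    have g1 : 0 ≤ 72 * kap * E ^ 3 / N ^ 2 * wt k := by
      have := (wt_pos k).le
      positivity
    have g2 : 0 ≤ 12 * kap ^ 2 / N ^ 2 * T k := by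
      have := hT0 k
      positivity
    by_cases hk0 : k = 0
    · rw [hk0] at g1 g2 ⊢
      rw [hf0, norm_zero, zero_pow two_ne_zero]
      exact add_nonneg g1 g2
    by_cases hkN : (N : ℤ) < |k|
    · rw [hfN k hkN, norm_zero, zero_pow two_ne_zero]
      exact add_nonneg g1 g2
    have h1 := pow_le_pow_left₀ (norm_nonneg _) (hbd' k hk0 (not_lt.1 hkN)) 2
    by_cases hlow : 2 * |k| ≤ N
    · have := low_bound N hN j ha hE hk0 hlow
      linarith
    · have := high_bound N hN j ha hE (not_le.1 hlow)
      rw [hTdef] at g2 ⊢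
      linarith
  have hR := ((summable_wt.hasSum.mul_left (72 * kap * E ^ 3 / (N : ℝ) ^ 2)).add
    (hT.mul_left (12 * kap ^ 2 / (N : ℝ) ^ 2))).mul_left (2 * (N : ℝ) ^ (2 * s))
  have hweight : ∀ k : ℤ, |k| ≤ (N : ℤ) → (1 + (k : ℝ) ^ 2) ^ s ≤ 2 * (N : ℝ) ^ (2 * s) := by
    intro k hk
    have hk' : |(k : ℝ)| ≤ N := by exact_mod_cast hk
    have hk2 : (k : ℝ) ^ 2 ≤ N ^ 2 := by
      rw [← sq_abs]; exact pow_le_pow_left₀ (abs_nonneg _) hk' 2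
    have hN2 : (1 : ℝ) ≤ (N : ℝ) ^ 2 := one_le_pow₀ hN1
    calc (1 + (k : ℝ) ^ 2) ^ s ≤ (2 * (N : ℝ) ^ 2) ^ s :=
          Real.rpow_le_rpow (by positivity) (by linarith) hs.1
      _ = 2 ^ s * (N : ℝ) ^ (2 * s) := by
          rw [Real.mul_rpow (by norm_num) (by positivity), Real.rpow_mul hN0.le]
          norm_num
      _ ≤ 2 * (N : ℝ) ^ (2 * s) := by
          have : (2 : ℝ) ^ s ≤ 2 ^ (1 : ℝ) := Real.rpow_le_rpow_of_exponent_le (by norm_num) hs.2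
          rw [Real.rpow_one] at this
          gcongr
  have hsum : ∑' k : ℤ, (1 + (k : ℝ) ^ 2) ^ s * ‖f k‖ ^ 2 ≤ 2 * (N : ℝ) ^ (2 * s) *
      (72 * kap * E ^ 3 / N ^ 2 * kap + 12 * kap ^ 2 / N ^ 2 * E ^ 3) := by
    have hpt2 : ∀ k : ℤ, (1 + (k : ℝ) ^ 2) ^ s * ‖f k‖ ^ 2 ≤ 2 * (N : ℝ) ^ (2 * s) *
        (72 * kap * E ^ 3 / N ^ 2 * wt k + 12 * kap ^ 2 / N ^ 2 * T k) := by
      intro k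
      by_cases hkN : (N : ℤ) < |k|
      · have := (sq_nonneg _).trans (hpt k)
        rw [hfN k hkN, norm_zero, zero_pow two_ne_zero, mul_zero]
        positivity
      · exact mul_le_mul (hweight k (not_lt.1 hkN)) (hpt k) (sq_nonneg _) (by positivity)
    refine Real.tsum_le_of_sum_le (fun k => by positivity) fun u => ?_
    refine (Finset.sum_le_sum fun k _ => hpt2 k).trans (sum_le_hasSum u (fun k _ => ?_) hR)
    exact (by positivity : 0 ≤ (1 + (k : ℝ) ^ 2) ^ s * ‖f k‖ ^ 2).trans (hpt2 k)
  have hv2 : hnorm 1 v ^ 2 = 2 * Real.pi * E := by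
    unfold hnorm
    rw [hen, Real.sq_sqrt (by positivity)]
  have hv0 : 0 ≤ hnorm 1 v := Real.sqrt_nonneg _
  have hNs : ((N : ℝ) ^ (-1 + s)) ^ 2 = (N : ℝ) ^ (2 * s) / N ^ 2 := by
    rw [← Real.rpow_natCast, ← Real.rpow_mul hN0.le, ← Real.rpow_natCast, ← Real.rpow_sub hN0]
    congr 1
    push_cast
    ring
  unfold hnorm at hv2 hv0 ⊢
  refine Real.sqrt_le_iff.2 ⟨by positivity, ?_⟩
  have h6 : ∀ t : ℝ, (t ^ 3) ^ 2 = (t ^ 2) ^ 3 := fun t => by ring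
  rw [mul_pow, mul_pow, hNs, h6, hv2]
  -- `2 * (72 + 12) = 168 ≤ 13 ^ 2`, and the surplus factor `(2π)²` is at least `1`.
  have hpi : (1 : ℝ) ≤ (2 * Real.pi) ^ 2 := one_le_pow₀ (by linarith [Real.pi_gt_three])
  set X : ℝ := (N : ℝ) ^ (2 * s) / N ^ 2 * (kap ^ 2 * E ^ 3) with hX
  have hX0 : 0 ≤ X := by positivity
  calc _ ≤ 2 * Real.pi * (2 * (N : ℝ) ^ (2 * s) *
        (72 * kap * E ^ 3 / N ^ 2 * kap + 12 * kap ^ 2 / N ^ 2 * E ^ 3)) := by gcongr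
    _ = 168 * (2 * Real.pi * X) := by rw [hX]; ring
    _ ≤ 169 * (2 * Real.pi * X) * (2 * Real.pi) ^ 2 := by
        have : 0 ≤ 2 * Real.pi * X := by positivity
        nlinarith [mul_le_mul_of_nonneg_left hpi this]
    _ = _ := by rw [hX]; ring

end
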